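/- arXiv:2602.20086 — 2 statements merged into one kernel-verified Lean document; each statement's English description precedes it below -/
import Mathlib

section
/- Let ε > 0 and let N and H be sufficiently large integers with H ≥ N^{5ε}. Then there exists ε' > 0 (one may take ε' = (1+ε)log(1+ε) − ε) such that the number of integers n with N − H < n ≤ N satisfying Ω(n) > (1+ε)·log log N is ≪ H/(log N)^{ε'}, where Ω(n) denotes the number of prime factors of n counted with multiplicity. -/
open Finset

lemma aux_count (N H d : ℕ) (hd : 0 < d) (hdH : d ≤ H) :
    (((Finset.Ioc (N - H) N).filter (fun n => d ∣ n)).card : ℝ) ≤ 2 * H / d := by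
  have h1 : ((Finset.Ioc (N - H) N).filter (fun n => d ∣ n)) ⊆
      (Finset.Icc ((N - H) / d + 1) (N / d)).image (fun j => d * j) := by
    intro n hn
    simp only [mem_filter, mem_Ioc, mem_image, mem_Icc] at *
    obtain ⟨⟨h1, h2⟩, j, rfl⟩ := hn
    refine ⟨j, ⟨?_, ?_⟩, rfl⟩
    · exact (Nat.div_lt_iff_lt_mul hd).2 (by rwa [mul_comm])
    · exact (Nat.le_div_iff_mul_le hd).2 (by rwa [mul_comm])
  have h2 := (Finset.card_le_card h1).trans Finset.card_image_le
  rw [Nat.card_Icc] at h2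
  have h3 : N / d + 1 - ((N - H) / d + 1) ≤ H / d + 1 := by
    have : N / d ≤ ((N - H) + H) / d := Nat.div_le_div_right (by omega)
    have h4 : ((N - H) + H) / d ≤ (N - H) / d + H / d + 1 := by
      rw [Nat.add_div hd]; split_ifs <;> omega
    have h5 : N / d ≤ (N - H) / d + H / d + 1 := this.trans h4
    generalize N / d = x1 at *
    generalize (N - H) / d = x2 at *
    generalize H / d = x3 at *
    omega
  have h5 : ((((Finset.Ioc (N - H) N).filter (fun n => d ∣ n)).card : ℕ) : ℝ) ≤ ((H / d : ℕ) : ℝ) + 1 := by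
    exact_mod_cast h2.trans h3
  have h6 : ((H / d : ℕ) : ℝ) ≤ (H : ℝ) / d := Nat.cast_div_le
  have h7 : (1 : ℝ) ≤ (H : ℝ) / d := by
    rw [le_div_iff₀ (by exact_mod_cast hd)]; simpa using (by exact_mod_cast hdH : (d : ℝ) ≤ H)
  calc _ ≤ _ := h5
    _ ≤ (H : ℝ) / d + H / d := by linarith
    _ = _ := by ring

lemma aux_double (k : ℕ) : ∀ s : Multiset ℕ, s.dedup.card + 2 * k ≤ s.card →
    ∃ t : Multiset ℕ, t.card = k ∧ t + t ≤ s := by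
  induction k with
  | zero => intro s _; exact ⟨0, by simp, by simp⟩
  | succ k ih =>
    intro s hs
    have h1 : ¬ s.Nodup := by
      intro h; rw [h.dedup] at hs; omega
    have h2 : ∃ a, a ::ₘ a ::ₘ 0 ≤ s := by
      rw [Multiset.nodup_iff_le] at h1; push Not at h1; exact h1
    obtain ⟨a, ha⟩ := h2
    obtain ⟨u, rfl⟩ := Multiset.le_iff_exists_add.1 ha
    have h3 : u.dedup.card ≤ ((a ::ₘ a ::ₘ 0) + u).dedup.card :=
      Finset.card_le_card (s := u.toFinset) (t := ((a ::ₘ a ::ₘ 0) + u).toFinset) (by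
        intro x hx
        rw [Multiset.mem_toFinset] at *
        exact Multiset.mem_add.2 (Or.inr hx))
    obtain ⟨t, ht, htu⟩ := ih u (by
      simp only [Multiset.card_add, Multiset.card_cons, Multiset.card_zero] at hs; omega)
    refine ⟨a ::ₘ t, by simp [ht], ?_⟩
    have : a ::ₘ t + a ::ₘ t = (a ::ₘ a ::ₘ 0) + (t + t) := by
      simp [Multiset.cons_add, Multiset.add_cons]
    rw [this]
    exact add_le_add_right htu _

/-- small prime factors, as a multiset -/
def smallPF (Y n : ℕ) : Multiset ℕ := ((n.primeFactorsList : Multiset ℕ)).filter (· ≤ Y)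

lemma aux_A (N H Y k : ℕ) (hY : Y ^ (2 * k) ≤ H) :
    (((Finset.Ioc (N - H) N).filter
      (fun n => (smallPF Y n).dedup.card + 2 * k ≤ (smallPF Y n).card)).card : ℝ) ≤ 8 * H / 2 ^ k := by
  have h1 : ((Finset.Ioc (N - H) N).filter
      (fun n => (smallPF Y n).dedup.card + 2 * k ≤ (smallPF Y n).card)) ⊆
      (Finset.Ioo (2 ^ k - 1) (Y ^ k + 1)).biUnion
        (fun m => (Finset.Ioc (N - H) N).filter (fun n => m ^ 2 ∣ n)) := by
    intro n hn
    rw [mem_filter] at hn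
    obtain ⟨hn, h⟩ := hn
    obtain ⟨t, ht, hts⟩ := aux_double k _ h
    have hn0 : n ≠ 0 := by rw [mem_Ioc] at hn; omega
    have hmem : ∀ x ∈ t, 2 ≤ x ∧ x ≤ Y := by
      intro x hx
      have := Multiset.mem_of_le hts (Multiset.mem_add.2 (Or.inl hx))
      rw [smallPF, Multiset.mem_filter] at this
      exact ⟨(Nat.prime_of_mem_primeFactorsList (by simpa using this.1)).two_le, this.2⟩
    rw [mem_biUnion]
    refine ⟨t.prod, ?_, ?_⟩
    · rw [mem_Ioo]
      have a1 : 2 ^ k ≤ t.prod := by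
        rw [← ht]; exact Multiset.pow_card_le_prod (fun x hx => (hmem x hx).1)
      have a2 : t.prod ≤ Y ^ k := by
        rw [← ht]; exact Multiset.prod_le_pow_card _ _ (fun x hx => (hmem x hx).2)
      have : 0 < 2 ^ k := by positivity
      omega
    · rw [mem_filter]
      refine ⟨hn, ?_⟩
      have := Multiset.prod_dvd_prod_of_le (hts.trans (Multiset.filter_le _ _))
      rw [Multiset.prod_add, Multiset.prod_coe, Nat.prod_primeFactorsList hn0] at this
      rwa [pow_two]
  have h2 := (Finset.card_le_card h1).trans Finset.card_biUnion_le
  have h3 : (((Finset.Ioc (N - H) N).filter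
      (fun n => (smallPF Y n).dedup.card + 2 * k ≤ (smallPF Y n).card)).card : ℝ) ≤
      ∑ m ∈ Finset.Ioo (2 ^ k - 1) (Y ^ k + 1), (2 * H) * ((m : ℝ) ^ 2)⁻¹ := by
    refine (Nat.cast_le.2 h2).trans ?_
    rw [Nat.cast_sum]
    refine Finset.sum_le_sum fun m hm => ?_
    rw [mem_Ioo] at hm
    have hm0 : 0 < m := by omega
    have := aux_count N H (m ^ 2) (by positivity) (by
      refine le_trans (Nat.pow_le_pow_left (by omega : m ≤ Y ^ k) 2) ?_
      rw [← pow_mul, mul_comm k]; exact hY)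
    rw [Nat.cast_pow] at this
    rwa [← div_eq_mul_inv]
  rw [← Finset.mul_sum] at h3
  refine h3.trans ?_
  have h4 := sum_Ioo_inv_sq_le (α := ℝ) (2 ^ k - 1) (Y ^ k + 1)
  have h5 : (((2 ^ k - 1 : ℕ) : ℝ) + 1) = 2 ^ k := by
    have : 1 ≤ 2 ^ k := Nat.one_le_two_pow
    push_cast [this]; ring
  rw [h5] at h4
  calc _ ≤ 2 * (H : ℝ) * (2 / 2 ^ k) := by gcongr
    _ = 4 * H / 2 ^ k := by ring
    _ ≤ _ := by gcongr; norm_num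

lemma aux_C (n Y : ℕ) (y : ℝ) (hn : n ≠ 0) (hy : 0 ≤ y) (hyY : y ≤ Y + 1) :
    y ^ (n.primeFactorsList.length - (smallPF Y n).card) ≤ n := by
  set u := ((n.primeFactorsList : Multiset ℕ)).filter (fun x => ¬ x ≤ Y) with hu
  have h1 : smallPF Y n + u = (n.primeFactorsList : Multiset ℕ) :=
    Multiset.filter_add_not _ _
  have h2 : (smallPF Y n).card + u.card = n.primeFactorsList.length := by
    rw [← Multiset.card_add, h1]; simp
  have h3 : n.primeFactorsList.length - (smallPF Y n).card = u.card := by omega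
  rw [h3]
  have h4 : (Y + 1) ^ u.card ≤ u.prod := Multiset.pow_card_le_prod (fun x hx => by
    rw [hu, Multiset.mem_filter] at hx; omega)
  have h5 : u.prod ∣ n := by
    have := Multiset.prod_dvd_prod_of_le (Multiset.filter_le (fun x => ¬ x ≤ Y) (n.primeFactorsList : Multiset ℕ))
    rwa [Multiset.prod_coe, Nat.prod_primeFactorsList hn] at this
  have h6 := h4.trans (Nat.le_of_dvd (Nat.pos_of_ne_zero hn) h5)
  calc y ^ u.card ≤ ((Y : ℝ) + 1) ^ u.card := by gcongr
    _ ≤ n := by exact_mod_cast h6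

lemma aux_key (Y k T n : ℕ) (hT : T ≤ (smallPF Y n).dedup.card) :
    (T + 1 - k) ^ k ≤ ((((Fintype.piFinset (fun _ : Fin k => (Y + 1).primesBelow)).filter
      (fun f => Function.Injective f))).filter (fun f => ∏ i, f i ∣ n)).card := by
  classical
  set Q : Finset ℕ := (smallPF Y n).toFinset with hQ
  have hQc : T ≤ Q.card := hT
  have e1 : (T + 1 - k) ^ k ≤ Fintype.card (Fin k ↪ Q) := by
    rw [Fintype.card_embedding_eq, Fintype.card_fin, Fintype.card_coe]
    exact (Nat.pow_sub_le_descFactorial T k).trans (Nat.descFactorial_le _ hQc)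
  refine e1.trans ?_
  rw [← Finset.card_univ]
  refine Finset.card_le_card_of_injOn (fun f => fun i => (f i : ℕ)) ?_ ?_
  · intro f _
    have hq : ∀ i, (f i : ℕ).Prime ∧ (f i : ℕ) ∣ n ∧ (f i : ℕ) ≤ Y := by
      intro i
      have h0 := (f i).2
      have : (f i : ℕ) ∈ smallPF Y n := Multiset.mem_toFinset.1 h0
      rw [smallPF, Multiset.mem_filter, Multiset.mem_coe] at this
      exact ⟨Nat.prime_of_mem_primeFactorsList this.1, Nat.dvd_of_mem_primeFactorsList this.1, this.2⟩
    have hinj : Function.Injective (fun i => (f i : ℕ)) :=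
      Subtype.val_injective.comp f.injective
    simp only [coe_filter, Set.mem_ofPred_eq, mem_filter, Fintype.mem_piFinset]
    refine ⟨⟨fun i => ?_, hinj⟩, ?_⟩
    · rw [Nat.mem_primesBelow]; exact ⟨by have := (hq i).2.2; omega, (hq i).1⟩
    · refine Fintype.prod_dvd_of_isRelPrime ?_ (fun i => (hq i).2.1)
      intro i j hij
      rw [Function.onFun, ← Nat.coprime_iff_isRelPrime]
      exact (Nat.coprime_primes (hq i).1 (hq j).1).2 (fun h => hij (hinj h))
  · intro f _ g _ h
    ext i
    exact congrFun h i

set_option maxHeartbeats 400000 in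
lemma aux_B (N H Y k T : ℕ) (hY : Y ^ k ≤ H) :
    (((Finset.Ioc (N - H) N).filter
      (fun n => T ≤ (smallPF Y n).dedup.card)).card : ℝ) * ((T + 1 - k : ℕ) : ℝ) ^ k ≤
     2 * H * (∑ p ∈ (Y + 1).primesBelow, (1 : ℝ) / p) ^ k := by
  obtain ⟨I, hI⟩ : ∃ I, I = Finset.Ioc (N - H) N := ⟨_, rfl⟩
  rw [← hI]
  obtain ⟨B, hB⟩ : ∃ B, B = I.filter (fun n => T ≤ (smallPF Y n).dedup.card) := ⟨_, rfl⟩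
  rw [← hB]
  obtain ⟨P, hP⟩ : ∃ P, P = (Y + 1).primesBelow := ⟨_, rfl⟩
  rw [← hP]
  obtain ⟨J, hJ⟩ : ∃ J, J = (Fintype.piFinset (fun _ : Fin k => P)).filter
    (fun f => Function.Injective f) := ⟨_, rfl⟩
  have hBI : B ⊆ I := hB ▸ Finset.filter_subset _ _
  have hJP : J ⊆ Fintype.piFinset (fun _ : Fin k => P) := hJ ▸ Finset.filter_subset _ _
  have key : ∀ n ∈ B, (T + 1 - k) ^ k ≤ (J.filter (fun f => ∏ i, f i ∣ n)).card := by
    intro n hn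
    rw [hB, mem_filter] at hn
    obtain ⟨hnI, hT⟩ := hn
    rw [hJ, hP]
    exact aux_key Y k T n hT
  have h1 : ((B.card * (T + 1 - k) ^ k : ℕ) : ℝ) ≤ ((∑ n ∈ I, (J.filter (fun f => ∏ i, f i ∣ n)).card : ℕ) : ℝ) := by
    rw [Nat.cast_le]
    calc B.card * (T + 1 - k) ^ k = ∑ n ∈ B, (T + 1 - k) ^ k := by simp
      _ ≤ ∑ n ∈ B, (J.filter (fun f => ∏ i, f i ∣ n)).card := Finset.sum_le_sum key
      _ ≤ _ := Finset.sum_le_sum_of_subset hBI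
  have h2 : ∑ n ∈ I, (J.filter (fun f => ∏ i, f i ∣ n)).card =
      ∑ f ∈ J, (I.filter (fun n => ∏ i, f i ∣ n)).card := by
    simp only [Finset.card_filter]
    exact Finset.sum_comm
  rw [h2] at h1
  rw [Nat.cast_mul, Nat.cast_pow, Nat.cast_sum] at h1
  refine h1.trans ?_
  rw [Finset.sum_pow', Finset.mul_sum]
  refine (Finset.sum_le_sum (g := fun f => 2 * (H : ℝ) * ∏ i, (1 : ℝ) / f i) ?_).trans
    (Finset.sum_le_sum_of_subset_of_nonneg hJP ?_)
  · intro f hf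
    rw [hJ, mem_filter, Fintype.mem_piFinset] at hf
    have hp : ∀ i, f i ≤ Y ∧ 0 < f i := fun i => by
      have := hf.1 i
      rw [hP, Nat.mem_primesBelow] at this
      exact ⟨by omega, this.2.pos⟩
    rw [hI]
    have := aux_count N H (∏ i, f i) (Finset.prod_pos (fun i _ => (hp i).2)) (by
      refine le_trans ?_ hY
      refine (Finset.prod_le_pow_card _ _ Y (fun i _ => (hp i).1)).trans ?_
      simp)
    refine this.trans (le_of_eq ?_)
    simp [div_eq_mul_inv]
  · intro f _ _
    exact mul_nonneg (by positivity) (Finset.prod_nonneg fun i _ => by positivity)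

lemma aux_zeta (s : ℝ) (hs : 1 < s) : ∑' n : ℕ, (n : ℝ) ^ (-s) ≤ 1 + 1 / (s - 1) := by
  have h := ZetaAsymptotics.zeta_limit_aux1 hs
  have h0 : 0 ≤ ZetaAsymptotics.termTSum s := tsum_nonneg (fun n => ZetaAsymptotics.term_nonneg _ _)
  have h1 : ∑' n : ℕ, (n : ℝ) ^ (-s) = ∑' n : ℕ, 1 / (n + 1 : ℝ) ^ s := by
    have hsum : Summable (fun n : ℕ => (n : ℝ) ^ (-s)) := Real.summable_nat_rpow.2 (by linarith)
    rw [hsum.tsum_eq_zero_add]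
    rw [Nat.cast_zero, Real.zero_rpow (by linarith), zero_add]
    refine tsum_congr fun n => ?_
    rw [Real.rpow_neg (by positivity), one_div]; push_cast; rfl
  rw [h1]
  nlinarith

lemma aux_D1 (s : ℝ) (hs : 1 < s) (M : ℕ) :
    ∑ p ∈ M.primesBelow, (p : ℝ) ^ (-s) ≤ Real.log (1 + 1 / (s - 1)) := by
  let f : ℕ →* ℝ :=
    { toFun := fun n => (n : ℝ) ^ (-s)
      map_one' := by simp
      map_mul' := fun m n => by
        push_cast; exact Real.mul_rpow (by positivity) (by positivity) }
  have hsum : Summable f := Real.summable_nat_rpow.2 (by linarith)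
  have h1 := EulerProduct.prod_primesBelow_geometric_eq_tsum_smoothNumbers hsum M
  have h2 : ∑' m : M.smoothNumbers, f m ≤ ∑' n : ℕ, f n :=
    hsum.tsum_subtype_le f _ (fun n => Real.rpow_nonneg (by positivity) _)
  have h3 : ∑' n : ℕ, f n ≤ 1 + 1 / (s - 1) := aux_zeta s hs
  rw [Real.le_log_iff_exp_le (by have : 0 < s - 1 := by linarith
                                 positivity), Real.exp_sum]
  refine le_trans ?_ (h2.trans h3)
  rw [← h1]
  refine Finset.prod_le_prod (fun _ _ => (Real.exp_pos _).le) fun p hp => ?_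
  have hp1 : (1 : ℝ) < p := by exact_mod_cast (Nat.mem_primesBelow.1 hp).2.one_lt
  have hlt : (p : ℝ) ^ (-s) < 1 := Real.rpow_lt_one_of_one_lt_of_neg hp1 (by linarith)
  change _ ≤ (1 - (p : ℝ) ^ (-s))⁻¹
  rw [le_inv_comm₀ (Real.exp_pos _) (by linarith), ← Real.exp_neg]
  linarith [Real.add_one_le_exp (-(p : ℝ) ^ (-s))]

lemma aux_D (c : ℝ) (hc : 0 < c) : ∀ᶠ N : ℕ in Filter.atTop, ∀ Y : ℕ, Y ≤ N →
    ∑ p ∈ (Y + 1).primesBelow, (1 : ℝ) / p ≤ (1 + c) * Real.log (Real.log N) := by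
  obtain ⟨η, hη, hη1⟩ : ∃ η : ℝ, 0 < η ∧ Real.exp η ≤ 1 + c / 2 := by
    refine ⟨Real.log (1 + c / 2), Real.log_pos (by linarith), ?_⟩
    rw [Real.exp_log (by linarith)]
  have t1 : Filter.Tendsto (fun N : ℕ => Real.log N) Filter.atTop Filter.atTop :=
    Real.tendsto_log_atTop.comp tendsto_natCast_atTop_atTop
  have t2 := Real.tendsto_log_atTop.comp t1
  filter_upwards [t1.eventually_ge_atTop (max 1 η), Filter.eventually_ge_atTop 2,
    t2.eventually_ge_atTop (max 1 ((1 + c / 2) * Real.log (2 / η) / (c / 2)))] with N h1 hN2 h2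
  intro Y hY
  simp only [Function.comp] at h2
  set l := Real.log N with hl
  have hl1 : 1 ≤ l := (le_max_left _ _).trans h1
  have hlη : η ≤ l := (le_max_right _ _).trans h1
  have hL1 : 1 ≤ Real.log l := (le_max_left _ _).trans h2
  have hL2 : (1 + c / 2) * Real.log (2 / η) ≤ Real.log l * (c / 2) := by
    have := (le_max_right _ _).trans h2
    rwa [div_le_iff₀ (by linarith)] at this
  have hs : 1 < 1 + η / l := by have : 0 < η / l := by positivity
                                linarith
  have h3 := aux_D1 (1 + η / l) hs (Y + 1)
  have h4 : ∑ p ∈ (Y + 1).primesBelow, (1 : ℝ) / p ≤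
      Real.exp η * ∑ p ∈ (Y + 1).primesBelow, (p : ℝ) ^ (-(1 + η / l)) := by
    rw [Finset.mul_sum]
    refine Finset.sum_le_sum fun p hp => ?_
    rw [Nat.mem_primesBelow] at hp
    have hp0 : (0 : ℝ) < p := by exact_mod_cast hp.2.pos
    have hpN : (p : ℝ) ≤ N := by exact_mod_cast (by omega : p ≤ N)
    have hlp : Real.log p ≤ l := Real.log_le_log hp0 hpN
    rw [neg_add, Real.rpow_add hp0, Real.rpow_neg_one, one_div, Real.rpow_def_of_pos hp0,
      mul_left_comm, ← Real.exp_add]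
    refine le_mul_of_one_le_right (by positivity) (Real.one_le_exp ?_)
    have : Real.log p * (η / l) ≤ l * (η / l) := by gcongr
    have h5 : l * (η / l) = η := by field_simp
    linarith
  have h5 : Real.log (1 + 1 / (1 + η / l - 1)) ≤ Real.log l + Real.log (2 / η) := by
    rw [← Real.log_mul (by positivity) (by positivity)]
    refine Real.log_le_log (by rw [add_sub_cancel_left]; positivity) ?_
    rw [add_sub_cancel_left, one_div_div]
    have : 1 ≤ l / η := by rwa [le_div_iff₀ hη, one_mul]
    calc 1 + l / η ≤ l / η + l / η := by linarith
      _ = l * (2 / η) := by ring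
  have h6 := h3.trans h5
  have h7 : 0 ≤ ∑ p ∈ (Y + 1).primesBelow, (p : ℝ) ^ (-(1 + η / l)) :=
    Finset.sum_nonneg fun p _ => Real.rpow_nonneg (by positivity) _
  calc _ ≤ _ := h4
    _ ≤ (1 + c / 2) * (Real.log l + Real.log (2 / η)) :=
      mul_le_mul hη1 h6 h7 (by positivity)
    _ ≤ _ := by linarith
set_option maxHeartbeats 2000000 in
lemma aux_main (ε : ℝ) (hε : 0 < ε) (hε1 : ε ≤ 1) :
    ∃ ε' : ℝ, 0 < ε' ∧ ∃ C : ℝ, 0 < C ∧ ∀ᶠ N : ℕ in Filter.atTop, ∀ H : ℕ,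
      (N : ℝ) ^ (5 * ε) ≤ (H : ℝ) →
      (((Finset.Ioc (N - H) N).filter
          (fun n => (1 + ε) * Real.log (Real.log N) < (n.primeFactorsList.length : ℝ))).card : ℝ)
        ≤ C * (H : ℝ) / (Real.log N) ^ ε' := by
  set a := ε ^ 2 / 16 with ha
  have ha0 : 0 < a := by positivity
  set ρ := (1 + ε / 8) / (1 + ε / 4) with hρ
  have hρ0 : 0 < ρ := by positivity
  have hρ1 : ρ < 1 := by rw [hρ, div_lt_one (by positivity)]; linarith
  have hρ2 : 1 / 2 ≤ ρ := by rw [hρ, le_div_iff₀ (by positivity)]; linarith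
  have hlogρ : Real.log ρ < 0 := Real.log_neg hρ0 hρ1
  refine ⟨-(a * Real.log ρ), by nlinarith, 10 / ρ, by positivity, ?_⟩
  have t1 : Filter.Tendsto (fun N : ℕ => Real.log N) Filter.atTop Filter.atTop :=
    Real.tendsto_log_atTop.comp tendsto_natCast_atTop_atTop
  have t2 := Real.tendsto_log_atTop.comp t1
  filter_upwards [t1.eventually_ge_atTop 1, Filter.eventually_ge_atTop 2,
    t2.eventually_ge_atTop (max 1 (4 / ε)), aux_D (ε / 8) (by positivity)] with N hl1 hN2 hL hD
  intro H hH
  simp only [Function.comp] at hL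
  set l := Real.log N with hl
  set L := Real.log l with hLdef
  have hL1 : 1 ≤ L := (le_max_left _ _).trans hL
  have hL4 : 4 ≤ ε * L := by
    have := (le_max_right _ _).trans hL
    rw [div_le_iff₀ hε] at this; linarith
  have hL0 : 0 < L := by linarith
  have hl0 : 0 < l := by linarith
  have hN0 : (0 : ℝ) < N := by exact_mod_cast (by omega : 0 < N)
  set k := ⌊a * L⌋₊ with hk
  have hk1 : (k : ℝ) ≤ a * L := Nat.floor_le (by positivity)
  have hk2 : a * L < k + 1 := Nat.lt_floor_add_one _
  set ly := 4 * l / (ε * L) with hly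
  have hly0 : 0 < ly := by positivity
  set y := Real.exp ly with hy
  set Y := ⌊y⌋₊ with hYdef
  have hYy : (Y : ℝ) ≤ y := Nat.floor_le (Real.exp_pos _).le
  have hyY : y ≤ Y + 1 := (Nat.lt_floor_add_one _).le
  have hY1 : 1 ≤ Y := Nat.le_floor (by rw [Nat.cast_one]; exact Real.one_le_exp hly0.le)
  have hyN : y ≤ N := by
    rw [hy, ← Real.exp_log hN0]
    refine Real.exp_le_exp.2 ?_
    rw [← hl, hly, div_le_iff₀ (by positivity)]
    nlinarith
  have hYN : Y ≤ N := by exact_mod_cast hYy.trans hyN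
  have hkL : (k : ℝ) ≤ ε * L / 16 := by
    have : a ≤ ε / 16 := by rw [ha]; nlinarith
    nlinarith
  have hY2k : Y ^ (2 * k) ≤ H := by
    have : ((Y : ℝ)) ^ (2 * k) ≤ H := by
      refine le_trans (pow_le_pow_left₀ (by positivity) hYy _) (le_trans ?_ hH)
      rw [hy, ← Real.exp_nat_mul, Real.rpow_def_of_pos hN0, ← hl]
      refine Real.exp_le_exp.2 ?_
      push_cast
      calc 2 * (k : ℝ) * ly ≤ 2 * (a * L) * ly := by gcongr
        _ = l * (ε / 2) := by rw [hly, ha]; field_simp; ring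
        _ ≤ l * (5 * ε) := by gcongr; linarith
    exact_mod_cast this
  have hYk : Y ^ k ≤ H := (Nat.pow_le_pow_right hY1 (by omega)).trans hY2k
  set T := ⌈(1 + ε / 2) * L⌉₊ with hT
  have hA := aux_A N H Y k hY2k
  have hB := aux_B N H Y k T hYk
  have hsub : (Finset.Ioc (N - H) N).filter
      (fun n => (1 + ε) * L < (n.primeFactorsList.length : ℝ)) ⊆
      ((Finset.Ioc (N - H) N).filter
        (fun n => (smallPF Y n).dedup.card + 2 * k ≤ (smallPF Y n).card)) ∪
      ((Finset.Ioc (N - H) N).filter (fun n => T ≤ (smallPF Y n).dedup.card)) := by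
    intro n hn
    rw [mem_filter] at hn
    obtain ⟨hnI, hΩ⟩ := hn
    rw [mem_union, mem_filter, mem_filter]
    by_cases hc : (smallPF Y n).dedup.card + 2 * k ≤ (smallPF Y n).card
    · exact Or.inl ⟨hnI, hc⟩
    right
    refine ⟨hnI, ?_⟩
    rw [mem_Ioc] at hnI
    have h1 := aux_C n Y y (by omega) (Real.exp_pos _).le hyY
    set e := n.primeFactorsList.length - (smallPF Y n).card with he
    have h2 : y ^ e ≤ N := h1.trans (by exact_mod_cast hnI.2)
    have h3 : (e : ℝ) ≤ ε * L / 4 := by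
      rw [hy, ← Real.exp_nat_mul, ← Real.le_log_iff_exp_le hN0, ← hl, hly, ← mul_div_assoc,
        div_le_iff₀ (by positivity)] at h2
      have : (e : ℝ) * 4 * l ≤ (ε * L) * l := by linarith
      have := le_of_mul_le_mul_right this hl0
      linarith
    have h4 : (n.primeFactorsList.length : ℝ) ≤ e + (smallPF Y n).card := by
      exact_mod_cast (by omega : n.primeFactorsList.length ≤ e + (smallPF Y n).card)
    have h5 : ((smallPF Y n).card : ℝ) ≤ (smallPF Y n).dedup.card + 2 * k := by
      exact_mod_cast (by omega : (smallPF Y n).card ≤ (smallPF Y n).dedup.card + 2 * k)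
    rw [hT]
    refine Nat.ceil_le.2 ?_
    nlinarith
  have hB2 : (((Finset.Ioc (N - H) N).filter
      (fun n => T ≤ (smallPF Y n).dedup.card)).card : ℝ) ≤ 2 * H * ρ ^ k := by
    have hX := hD Y hYN
    have hX0 : 0 ≤ ∑ p ∈ (Y + 1).primesBelow, (1 : ℝ) / p :=
      Finset.sum_nonneg fun p _ => by positivity
    have hT1 : (1 + ε / 4) * L ≤ ((T + 1 - k : ℕ) : ℝ) := by
      have b1 : (1 + ε / 2) * L ≤ T := Nat.le_ceil _
      have b2 : (T : ℝ) ≤ (T + 1 - k : ℕ) + k := by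
        exact_mod_cast (by omega : T ≤ (T + 1 - k) + k)
      nlinarith
    have hpos : 0 < (1 + ε / 4) * L := by positivity
    have h1 : (((Finset.Ioc (N - H) N).filter
        (fun n => T ≤ (smallPF Y n).dedup.card)).card : ℝ) * ((1 + ε / 4) * L) ^ k ≤
        2 * H * ((1 + ε / 8) * L) ^ k := by
      refine le_trans ?_ (hB.trans ?_)
      · gcongr
      · gcongr
    have h2 : (1 + ε / 8) * L = ρ * ((1 + ε / 4) * L) := by
      rw [hρ]; field_simp
    rw [h2, mul_pow ρ, ← mul_assoc] at h1
    exact le_of_mul_le_mul_right h1 (pow_pos hpos k)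
  have hA2 : 8 * (H : ℝ) / 2 ^ k ≤ 8 * H * ρ ^ k := by
    rw [div_eq_mul_inv, ← inv_pow]
    gcongr
    rwa [← one_div]
  have hcard : (((Finset.Ioc (N - H) N).filter
      (fun n => (1 + ε) * L < (n.primeFactorsList.length : ℝ))).card : ℝ) ≤ 10 * H * ρ ^ k := by
    have := (Finset.card_le_card hsub).trans (Finset.card_union_le _ _)
    have h1 := (Nat.cast_le (α := ℝ)).2 this
    rw [Nat.cast_add] at h1
    linarith
  refine hcard.trans ?_
  have hfin : ρ ^ k ≤ ρ⁻¹ * l ^ (a * Real.log ρ) := by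
    have h1 : ρ ^ k = ρ⁻¹ * ρ ^ (k + 1) := by rw [pow_succ]; field_simp
    rw [h1]
    gcongr
    rw [← Real.rpow_natCast, Real.rpow_def_of_pos hρ0, Real.rpow_def_of_pos hl0]
    refine Real.exp_le_exp.2 ?_
    push_cast
    rw [← hLdef]
    nlinarith
  rw [Real.rpow_neg hl0.le, div_inv_eq_mul]
  calc 10 * (H : ℝ) * ρ ^ k ≤ 10 * H * (ρ⁻¹ * l ^ (a * Real.log ρ)) := by gcongr
    _ = _ := by ring

/-- For `ε > 0` and `N, H` sufficiently large with `H ≥ N^{5ε}`, there is `ε' > 0`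
such that the number of `n ∈ (N - H, N]` with `Ω(n) > (1+ε) log log N` is
`≪ H / (log N)^{ε'}`, where `Ω` counts prime factors with multiplicity. -/
theorem stmt_1 (ε : ℝ) (hε : 0 < ε) :
    ∃ ε' : ℝ, 0 < ε' ∧ ∃ C : ℝ, 0 < C ∧ ∃ N₀ : ℕ, ∀ N H : ℕ,
      N₀ ≤ N → N₀ ≤ H → (N : ℝ) ^ (5 * ε) ≤ (H : ℝ) →
      (((Finset.Ioc (N - H) N).filter
          (fun n => (1 + ε) * Real.log (Real.log N) < (n.primeFactorsList.length : ℝ))).card : ℝ)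
        ≤ C * (H : ℝ) / (Real.log N) ^ ε' := by
  obtain ⟨ε', hε', C, hC, h⟩ := aux_main (min ε 1) (lt_min hε one_pos) (min_le_right _ _)
  have t1 : Filter.Tendsto (fun N : ℕ => Real.log N) Filter.atTop Filter.atTop :=
    Real.tendsto_log_atTop.comp tendsto_natCast_atTop_atTop
  obtain ⟨N₀, hN₀⟩ := Filter.eventually_atTop.1
    ((h.and (t1.eventually_ge_atTop 1)).and (Filter.eventually_ge_atTop 1))
  refine ⟨ε', hε', C, hC, N₀, fun N H hN _ hH => ?_⟩
  obtain ⟨⟨h1, h2⟩, h3⟩ := hN₀ N hN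
  have h4 := h1 H (le_trans (Real.rpow_le_rpow_of_exponent_le (by exact_mod_cast h3)
    (by linarith [min_le_left ε 1])) hH)
  refine le_trans ?_ h4
  rw [Nat.cast_le]
  refine Finset.card_le_card (Finset.monotone_filter_right _ ?_)
  intro n _ hn
  refine lt_of_le_of_lt ?_ hn
  have : 0 ≤ Real.log (Real.log N) := Real.log_nonneg h2
  have := min_le_left ε 1
  gcongr
end

section
/- Let k ≥ 2 and let ε ≥ 0 be sufficiently small. Let Y₁, …, Y_k be mean-zero, variance-one, jointly Gaussian random variables with E[Y_{l₁} Y_{l₂}] ≤ ε whenever l₁ ≠ l₂. Then for any δ with 100ε ≤ δ ≤ 1/100, P(max_{1≤l≤k} Yₗ ≤ √((2−δ) log k)) ≤ exp(−Θ(k^{δ/20}/√(log k))) + k^{−δ²/(50ε)}. -/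
open MeasureTheory Finset ProbabilityTheory

theorem mvt_aux (g g' : ℝ → ℝ) (B T : ℝ) (hg : ∀ s, HasDerivAt g (g' s) s)
    (hB : ∀ s ∈ Set.Icc 0 T, |g' s| ≤ B) : ∀ s ∈ Set.Icc 0 T, |g s - g 0| ≤ B * s := by
  intro s hs
  have := (convex_Icc (0:ℝ) T).norm_image_sub_le_of_norm_hasDerivWithin_le (f := g) (f' := g')
    (C := B) (fun x _ => (hg x).hasDerivWithinAt) (fun x hx => hB x hx)
    (x := 0) (y := s) ⟨le_rfl, hs.1.trans hs.2⟩ hs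
  simpa [Real.norm_eq_abs, abs_of_nonneg hs.1] using this

theorem taylor_aux (g g1 g2 g3 : ℝ → ℝ) (B T : ℝ) (hT : 0 ≤ T)
    (h0 : ∀ s, HasDerivAt g (g1 s) s) (h1 : ∀ s, HasDerivAt g1 (g2 s) s)
    (h2 : ∀ s, HasDerivAt g2 (g3 s) s) (hB : ∀ s, |g3 s| ≤ B) :
    |g T - (g 0 + T * g1 0 + T ^ 2 / 2 * g2 0)| ≤ B * T ^ 3 := by
  have hB0 : 0 ≤ B := (abs_nonneg _).trans (hB 0)
  have a2 := mvt_aux g2 g3 B T h2 (fun s _ => hB s)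
  have a1 := mvt_aux (fun s => g1 s - s * g2 0) (fun s => g2 s - g2 0) (B * T) T
    (fun s => by simpa using (h1 s).fun_sub ((hasDerivAt_id s).mul_const (g2 0)))
    (fun s hs => (a2 s hs).trans (by gcongr; exact hs.2))
  have a0 := mvt_aux (fun s => g s - s * g1 0 - s ^ 2 / 2 * g2 0) (fun s => g1 s - g1 0 - s * g2 0)
    (B * T * T) T
    (fun s => by
      have := (((h0 s).fun_sub ((hasDerivAt_id s).mul_const (g1 0)))).fun_sub
        ((((hasDerivAt_id s).fun_pow 2).div_const 2).mul_const (g2 0))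
      simpa using this)
    (fun s hs => by
      have := (a1 s hs).trans (show _ ≤ B * T * T by gcongr; exact hs.2)
      have e : g1 s - g1 0 - s * g2 0 = g1 s - s * g2 0 - (g1 0 - 0 * g2 0) := by ring
      rw [e]; exact this)
  have := a0 T ⟨hT, le_rfl⟩
  have e1 : g T - (g 0 + T * g1 0 + T ^ 2 / 2 * g2 0)
      = g T - T * g1 0 - T ^ 2 / 2 * g2 0 - (g 0 - 0 * g1 0 - 0 ^ 2 / 2 * g2 0) := by ring
  have e2 : B * T ^ 3 = B * T * T * T := by ring
  rw [e1, e2]; exact this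

noncomputable def Pr {ι : Type*} [Fintype ι] (f : ℝ → ℝ) (α : ι → ℕ) (S y : ι → ℝ) (s : ℝ) : ℝ :=
  ∏ l, iteratedDeriv (α l) f (S l + s * y l)

theorem Pr_deriv {ι : Type*} [Fintype ι] [DecidableEq ι] (f : ℝ → ℝ) (hf : ∀ n : ℕ, ContDiff ℝ n f)
    (α : ι → ℕ) (S y : ι → ℝ) (s : ℝ) :
    HasDerivAt (Pr f α S y) (∑ i, y i * Pr f (α + Pi.single i 1) S y s) s := by
  have h : ∀ l ∈ (Finset.univ : Finset ι), HasDerivAt (fun s => iteratedDeriv (α l) f (S l + s * y l))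
      (y l * iteratedDeriv (α l + 1) f (S l + s * y l)) s := by
    intro l _
    have h1 : HasDerivAt (iteratedDeriv (α l) f) (iteratedDeriv (α l + 1) f (S l + s * y l))
        (S l + s * y l) := by
      rw [iteratedDeriv_succ]
      refine DifferentiableAt.hasDerivAt ?_
      exact ((hf (α l + 1)).differentiable_iteratedDeriv (α l) (by exact_mod_cast Nat.lt_succ_self _)) _
    have h2 : HasDerivAt (fun s => S l + s * y l) (y l) s := by
      simpa using ((hasDerivAt_id s).mul_const (y l)).const_add (S l)
    rw [mul_comm]
    exact h1.comp s h2
  have := HasDerivAt.fun_finsetProd h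
  refine this.congr_deriv ?_
  refine Finset.sum_congr rfl fun i _ => ?_
  symm
  rw [Pr, ← Finset.mul_prod_erase _ _ (Finset.mem_univ i)]
  simp only [Pi.add_apply, Pi.single_eq_same, smul_eq_mul]
  rw [Finset.prod_congr rfl (g := fun j => iteratedDeriv (α j) f (S j + s * y j))]
  · ring
  · intro j hj
    simp [Pi.single_eq_of_ne (Finset.ne_of_mem_erase hj)]

theorem Pr_bound {ι : Type*} [Fintype ι] (f : ℝ → ℝ) (M : ℝ)
    (α : ι → ℕ) (hM : ∀ l, ∀ x, |iteratedDeriv (α l) f x| ≤ M) (S y : ι → ℝ) (s : ℝ) :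
    |Pr f α S y s| ≤ M ^ (Fintype.card ι) := by
  rw [Pr, Finset.abs_prod, ← Finset.card_univ, ← Finset.prod_const]
  exact Finset.prod_le_prod (fun _ _ => abs_nonneg _) (fun l _ => hM l _)

/-- Taylor expansion of the product. -/
theorem Pr_taylor {ι : Type*} [Fintype ι] [DecidableEq ι] (f : ℝ → ℝ)
    (hf : ∀ n : ℕ, ContDiff ℝ n f) (M : ℝ) (hM : ∀ n ≤ 3, ∀ x, |iteratedDeriv n f x| ≤ M)
    (S y : ι → ℝ) (T : ℝ) (hT : 0 ≤ T) :
    |∏ l, f (S l + T * y l) - (∏ l, f (S l) + T * ∑ i, y i * Pr f (Pi.single i 1) S 0 0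
      + T ^ 2 / 2 * ∑ i, ∑ j, y i * y j * Pr f (Pi.single i 1 + Pi.single j 1) S 0 0)|
    ≤ M ^ (Fintype.card ι) * (∑ i, |y i|) ^ 3 * T ^ 3 := by
  have hz : ∀ α, Pr f α S 0 0 = Pr f α S y 0 := by intro α; simp [Pr]
  have hsum : ∀ (s : ℝ) (α : ι → ℕ), HasDerivAt (Pr f α S y)
      (∑ i, y i * Pr f (α + Pi.single i 1) S y s) s := fun s α => Pr_deriv f hf α S y s
  have := taylor_aux (Pr f 0 S y) (fun s => ∑ i, y i * Pr f (Pi.single i 1) S y s)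
    (fun s => ∑ i, ∑ j, y i * y j * Pr f (Pi.single i 1 + Pi.single j 1) S y s)
    (fun s => ∑ i, ∑ j, ∑ m, y i * y j * (y m * Pr f (Pi.single i 1 + Pi.single j 1 + Pi.single m 1) S y s))
    (M ^ (Fintype.card ι) * (∑ i, |y i|) ^ 3) T hT
    (fun s => by simpa using hsum s 0)
    (fun s => by
      refine HasDerivAt.fun_sum fun i _ => ?_
      have := (hsum s (Pi.single i 1)).const_mul (y i)
      simpa [Finset.mul_sum, mul_assoc] using this)
    (fun s => by
      refine HasDerivAt.fun_sum fun i _ => HasDerivAt.fun_sum fun j _ => ?_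
      have := (hsum s (Pi.single i 1 + Pi.single j 1)).const_mul (y i * y j)
      simpa [Finset.mul_sum] using this)
    (fun s => by
      have e : M ^ (Fintype.card ι) * (∑ i, |y i|) ^ 3
        = ∑ i, ∑ j, ∑ m, |y i| * |y j| * (|y m| * M ^ (Fintype.card ι)) := by
        rw [pow_three]
        simp only [Finset.mul_sum, Finset.sum_mul]
        refine Finset.sum_congr rfl fun i _ => ?_
        refine Finset.sum_congr rfl fun j _ => ?_
        refine Finset.sum_congr rfl fun m _ => ?_
        ring
      rw [e]
      refine (Finset.abs_sum_le_sum_abs _ _).trans (Finset.sum_le_sum fun i _ => ?_)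
      refine (Finset.abs_sum_le_sum_abs _ _).trans (Finset.sum_le_sum fun j _ => ?_)
      refine (Finset.abs_sum_le_sum_abs _ _).trans (Finset.sum_le_sum fun m _ => ?_)
      simp only [abs_mul]
      gcongr
      refine Pr_bound f M _ (fun l => hM _ ?_) S y s
      simp only [Pi.add_apply, Pi.single_apply]
      split_ifs <;> norm_num)
  simp only [hz]
  simpa [Pr] using this

theorem gauss_moments {ι : Type*} [Fintype ι] (ν : Measure (ι → ℝ)) [IsGaussian ν] :
    (∀ i, Integrable (fun y : ι → ℝ => y i) ν) ∧ (∀ i j, Integrable (fun y : ι → ℝ => y i * y j) ν) ∧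
    Integrable (fun y : ι → ℝ => (∑ i, |y i|) ^ 3) ν := by
  have hm : ∀ (i : ι) (p : ENNReal), p ≠ ⊤ → MemLp (fun y : ι → ℝ => y i) p ν := fun i p hp =>
    IsGaussian.memLp_dual ν (ContinuousLinearMap.proj i) p hp
  refine ⟨fun i => memLp_one_iff_integrable.1 (hm i 1 (by simp)), fun i j => ?_, ?_⟩
  · exact (hm i 2 (by simp)).integrable_mul (hm j 2 (by simp))
  · have : MemLp (fun y : ι → ℝ => ∑ i, |y i|) 3 ν :=
      memLp_finsetSum _ (fun i _ => (hm i 3 (by simp)).abs)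
    have h := this.integrable_norm_pow (by norm_num)
    refine h.congr (Filter.Eventually.of_forall fun y => ?_)
    simp [abs_of_nonneg (Finset.sum_nonneg fun i _ => abs_nonneg (y i))]

theorem prod_cont {ι : Type*} [Fintype ι] (f : ℝ → ℝ) (hf : Continuous f) :
    Continuous (fun y : ι → ℝ => ∏ l, f (y l)) := by fun_prop

theorem prod_bdd {ι : Type*} [Fintype ι] (f : ℝ → ℝ) (h0 : ∀ x, 0 ≤ f x) (h1 : ∀ x, f x ≤ 1)
    (y : ι → ℝ) : ‖∏ l, f (y l)‖ ≤ 1 := by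
  rw [Real.norm_eq_abs, abs_of_nonneg (Finset.prod_nonneg fun _ _ => h0 _)]
  exact Finset.prod_le_one (fun _ _ => h0 _) (fun _ _ => h1 _)

theorem gauss_taylor {ι : Type*} [Fintype ι] [DecidableEq ι] (ν : Measure (ι → ℝ)) [IsGaussian ν]
    (hmean : ∀ i, ∫ y, y i ∂ν = 0) (f : ℝ → ℝ) (h0 : ∀ x, 0 ≤ f x) (h1 : ∀ x, f x ≤ 1)
    (hf : ∀ n : ℕ, ContDiff ℝ n f) (M : ℝ) (hM : ∀ n ≤ 3, ∀ x, |iteratedDeriv n f x| ≤ M)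
    (S : ι → ℝ) (T : ℝ) (hT : 0 ≤ T) :
    |∫ y, ∏ l, f (S l + T * y l) ∂ν - (∏ l, f (S l) +
      T ^ 2 / 2 * ∑ i, ∑ j, (∫ y, y i * y j ∂ν) * Pr f (Pi.single i 1 + Pi.single j 1) S 0 0)|
    ≤ M ^ (Fintype.card ι) * (∫ y, (∑ i, |y i|) ^ 3 ∂ν) * T ^ 3 := by
  obtain ⟨i1, i2, i3⟩ := gauss_moments ν
  have hF : Integrable (fun y : ι → ℝ => ∏ l, f (S l + T * y l)) ν := by
    refine Integrable.of_bound (C := 1) ?_ (Filter.Eventually.of_forall fun y => ?_)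
    · have := (hf 0).continuous
      exact Continuous.aestronglyMeasurable (by fun_prop)
    · exact prod_bdd f h0 h1 (fun l => S l + T * y l)
  have hA : Integrable (fun y : ι → ℝ => ∑ i, y i * Pr f (Pi.single i 1) S 0 0) ν :=
    integrable_finsetSum _ fun i _ => (i1 i).mul_const _
  have hB : Integrable (fun y : ι → ℝ => ∑ i, ∑ j, y i * y j *
      Pr f (Pi.single i 1 + Pi.single j 1) S 0 0) ν :=
    integrable_finsetSum _ fun i _ => integrable_finsetSum _ fun j _ => (i2 i j).mul_const _
  have hP : Integrable (fun y : ι → ℝ => (∏ l, f (S l) + T * ∑ i, y i * Pr f (Pi.single i 1) S 0 0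
      + T ^ 2 / 2 * ∑ i, ∑ j, y i * y j * Pr f (Pi.single i 1 + Pi.single j 1) S 0 0)) ν :=
    ((integrable_const _).add (hA.const_mul T)).add (hB.const_mul _)
  have hA1 : Integrable (fun y : ι → ℝ => ∏ l, f (S l) +
      T * ∑ i, y i * Pr f (Pi.single i 1) S 0 0) ν := (integrable_const _).add (hA.const_mul T)
  have e : ∫ y, (∏ l, f (S l) + T * ∑ i, y i * Pr f (Pi.single i 1) S 0 0
      + T ^ 2 / 2 * ∑ i, ∑ j, y i * y j * Pr f (Pi.single i 1 + Pi.single j 1) S 0 0) ∂ν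
      = ∏ l, f (S l) +
      T ^ 2 / 2 * ∑ i, ∑ j, (∫ y, y i * y j ∂ν) * Pr f (Pi.single i 1 + Pi.single j 1) S 0 0 := by
    rw [integral_add hA1 (hB.const_mul _),
      integral_add (integrable_const _) (hA.const_mul T), integral_const_mul, integral_const_mul,
      integral_finsetSum _ (fun i _ => (i1 i).mul_const _),
      integral_finsetSum _ (fun i _ => integrable_finsetSum _ fun j _ => (i2 i j).mul_const _)]
    have : ∀ i, ∫ y : ι → ℝ, ∑ j, y i * y j * Pr f (Pi.single i 1 + Pi.single j 1) S 0 0 ∂ν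
        = ∑ j, (∫ y, y i * y j ∂ν) * Pr f (Pi.single i 1 + Pi.single j 1) S 0 0 := by
      intro i
      rw [integral_finsetSum _ (fun j _ => (i2 i j).mul_const _)]
      simp only [integral_mul_const]
    simp only [this, integral_mul_const, hmean]
    simp
  rw [← e, ← integral_sub hF hP, ← integral_const_mul, ← integral_mul_const]
  refine (abs_integral_le_integral_abs).trans ?_
  refine integral_mono (hF.sub hP).abs ((i3.const_mul _).mul_const _) fun y => ?_
  exact Pr_taylor f hf M hM S y T hT

theorem Pr_off_nonneg {ι : Type*} [Fintype ι] [DecidableEq ι] (f : ℝ → ℝ) (h0 : ∀ x, 0 ≤ f x)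
    (hd : ∀ x, iteratedDeriv 1 f x ≤ 0) (i j : ι) (hij : i ≠ j) (S y : ι → ℝ) (s : ℝ) :
    0 ≤ Pr f (Pi.single i 1 + Pi.single j 1) S y s := by
  rw [Pr, ← Finset.mul_prod_erase _ _ (Finset.mem_univ i),
    ← Finset.mul_prod_erase _ _ (Finset.mem_erase.2 ⟨hij.symm, Finset.mem_univ j⟩), ← mul_assoc]
  refine mul_nonneg (mul_nonneg_of_nonpos_of_nonpos ?_ ?_) (Finset.prod_nonneg fun l hl => ?_)
  · simpa [hij, hij.symm] using hd (S i + s * y i)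
  · simpa [hij, hij.symm] using hd (S j + s * y j)
  · simp only [Finset.mem_erase] at hl
    simpa [Pi.single_eq_of_ne hl.1, Pi.single_eq_of_ne hl.2.1] using h0 _

theorem step_compare {ι : Type*} [Fintype ι] [DecidableEq ι] (ν ν' : Measure (ι → ℝ)) [IsGaussian ν]
    [IsGaussian ν'] (hmean : ∀ i, ∫ y, y i ∂ν = 0) (hmean' : ∀ i, ∫ y, y i ∂ν' = 0)
    (hdiag : ∀ i, ∫ y, y i * y i ∂ν = ∫ y, y i * y i ∂ν')
    (hoff : ∀ i j, i ≠ j → ∫ y, y i * y j ∂ν ≤ ∫ y, y i * y j ∂ν')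
    (f : ℝ → ℝ) (h0 : ∀ x, 0 ≤ f x) (h1 : ∀ x, f x ≤ 1) (hd : ∀ x, iteratedDeriv 1 f x ≤ 0)
    (hf : ∀ n : ℕ, ContDiff ℝ n f) (M : ℝ) (hM : ∀ n ≤ 3, ∀ x, |iteratedDeriv n f x| ≤ M) :
    ∃ C : ℝ, ∀ (S : ι → ℝ) (T : ℝ), 0 ≤ T →
    ∫ y, ∏ l, f (S l + T * y l) ∂ν ≤ ∫ y, ∏ l, f (S l + T * y l) ∂ν' + C * T ^ 3 := by
  refine ⟨M ^ (Fintype.card ι) * (∫ y, (∑ i, |y i|) ^ 3 ∂ν) +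
    M ^ (Fintype.card ι) * (∫ y, (∑ i, |y i|) ^ 3 ∂ν'), fun S T hT => ?_⟩
  have a := abs_le.1 (gauss_taylor ν hmean f h0 h1 hf M hM S T hT)
  have b := abs_le.1 (gauss_taylor ν' hmean' f h0 h1 hf M hM S T hT)
  have c : ∑ i, ∑ j, (∫ y, y i * y j ∂ν) * Pr f (Pi.single i 1 + Pi.single j 1) S 0 0
      ≤ ∑ i, ∑ j, (∫ y, y i * y j ∂ν') * Pr f (Pi.single i 1 + Pi.single j 1) S 0 0 := by
    refine Finset.sum_le_sum fun i _ => Finset.sum_le_sum fun j _ => ?_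
    by_cases hij : i = j
    · subst hij; rw [hdiag]
    · exact mul_le_mul_of_nonneg_right (hoff i j hij) (Pr_off_nonneg f h0 hd i j hij S 0 0)
  have d := mul_le_mul_of_nonneg_left c (show 0 ≤ T ^ 2 / 2 by positivity)
  linarith [a.2, b.1]

noncomputable def sc {ι : Type*} (a : ℝ) (ν : Measure (ι → ℝ)) : Measure (ι → ℝ) :=
  ν.map (fun y => √a • y)

instance sc_prob {ι : Type*} (a : ℝ) (ν : Measure (ι → ℝ)) [IsProbabilityMeasure ν] :
    IsProbabilityMeasure (sc a ν) :=
  Measure.isProbabilityMeasure_map (by fun_prop)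

open Measure in
theorem sc_add {ι : Type*} [Fintype ι] (ν : Measure (ι → ℝ)) [IsGaussian ν]
    (hmean : ∀ i, ∫ y, y i ∂ν = 0) (a b : ℝ) (ha : 0 ≤ a) (hb : 0 ≤ b) :
    sc (a + b) ν = sc a ν ∗ sc b ν := by
  have hint : ∫ y, y ∂ν = 0 := by
    ext i
    have := (ContinuousLinearMap.proj (R := ℝ) (φ := fun _ : ι => ℝ) i).integral_comp_comm
      (IsGaussian.integrable_id (μ := ν))
    simp only [id] at this
    rw [Pi.zero_apply, ← hmean i]
    exact this.symm
  have hm : ∀ L : StrongDual ℝ (ι → ℝ), ν[L] = 0 := by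
    intro L
    rw [IsGaussian.integral_dual, hint, map_zero]
  have key : ∀ (c : ℝ) (hc : 0 ≤ c) (L : StrongDual ℝ (ι → ℝ)),
      charFunDual (sc c ν) L = Complex.exp (-(c * Var[L; ν]) / 2) := by
    intro c hc L
    have e : sc c ν = ν.map ((√c) • ContinuousLinearMap.id ℝ (ι → ℝ)) := rfl
    rw [e, charFunDual_map, IsGaussian.charFunDual_eq_of_forall_strongDual_eq_zero hm]
    have : (L.comp ((√c) • ContinuousLinearMap.id ℝ (ι → ℝ)) : StrongDual ℝ (ι → ℝ)) = √c • L := by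
      ext; simp
    rw [this]
    have : Var[(√c • L : StrongDual ℝ (ι → ℝ)); ν] = c * Var[L; ν] := by
      have := variance_smul (√c) L ν
      rw [Real.sq_sqrt hc] at this
      exact this
    rw [this]; push_cast; rfl
  refine Measure.ext_of_charFunDual ?_
  ext L
  rw [charFunDual_conv, key _ (by positivity), key _ ha, key _ hb, ← Complex.exp_add]
  congr 1
  push_cast
  ring

open Measure in
theorem slepian_smooth {ι : Type*} [Fintype ι] [DecidableEq ι] (ν ν' : Measure (ι → ℝ)) [IsGaussian ν]
    [IsGaussian ν'] (hmean : ∀ i, ∫ y, y i ∂ν = 0) (hmean' : ∀ i, ∫ y, y i ∂ν' = 0)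
    (hdiag : ∀ i, ∫ y, y i * y i ∂ν = ∫ y, y i * y i ∂ν')
    (hoff : ∀ i j, i ≠ j → ∫ y, y i * y j ∂ν ≤ ∫ y, y i * y j ∂ν')
    (f : ℝ → ℝ) (h0 : ∀ x, 0 ≤ f x) (h1 : ∀ x, f x ≤ 1) (hd : ∀ x, iteratedDeriv 1 f x ≤ 0)
    (hf : ∀ n : ℕ, ContDiff ℝ n f) (M : ℝ) (hM : ∀ n ≤ 3, ∀ x, |iteratedDeriv n f x| ≤ M) :
    ∫ y, ∏ l, f (y l) ∂ν ≤ ∫ y, ∏ l, f (y l) ∂ν' := by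
  obtain ⟨C, hC⟩ := step_compare ν ν' hmean hmean' hdiag hoff f h0 h1 hd hf M hM
  have hfc := (hf 0).continuous
  have hFc := prod_cont (ι := ι) f hfc
  have hFi : ∀ m : Measure (ι → ℝ), IsProbabilityMeasure m →
      Integrable (fun y : ι → ℝ => ∏ l, f (y l)) m := fun m _ =>
    Integrable.of_bound hFc.aestronglyMeasurable 1 (Filter.Eventually.of_forall (prod_bdd f h0 h1))
  have hconv : ∀ (m κ : Measure (ι → ℝ)) (h : ℝ), IsProbabilityMeasure m → IsProbabilityMeasure κ →
      ∫ y, ∏ l, f (y l) ∂(m ∗ sc h κ) = ∫ S, ∫ y, ∏ l, f (S l + √h * y l) ∂κ ∂m := by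
    intro m κ h _ _
    rw [integral_conv (hFi _ inferInstance)]
    refine integral_congr_ae (Filter.Eventually.of_forall fun S => ?_)
    simp only [sc]
    rw [integral_map (by fun_prop) (by
      exact Continuous.aestronglyMeasurable (by fun_prop))]
    simp
  have hinner : ∀ (m κ : Measure (ι → ℝ)) (h : ℝ), IsProbabilityMeasure m → IsProbabilityMeasure κ →
      Integrable (fun S : ι → ℝ => ∫ y, ∏ l, f (S l + √h * y l) ∂κ) m := by
    intro m κ h _ _
    refine Integrable.integral_prod_left (f := fun p : (ι → ℝ) × (ι → ℝ) =>
      ∏ l, f (p.1 l + √h * p.2 l)) (μ := m) (ν := κ) ?_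
    refine Integrable.of_bound (Continuous.aestronglyMeasurable (by fun_prop)) 1
      (Filter.Eventually.of_forall fun p => prod_bdd f h0 h1 (fun l => p.1 l + √h * p.2 l))
  have hstep1 : ∀ (m : Measure (ι → ℝ)) (h : ℝ), IsProbabilityMeasure m → 
      ∫ y, ∏ l, f (y l) ∂(m ∗ sc h ν) ≤ ∫ y, ∏ l, f (y l) ∂(m ∗ sc h ν') + C * √h ^ 3 := by
    intro m h hm
    rw [hconv _ _ _ hm inferInstance, hconv _ _ _ hm inferInstance]
    have := integral_mono (hinner m ν h hm inferInstance)
      ((hinner m ν' h hm inferInstance).add (integrable_const (C * √h ^ 3)))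
      (fun S => hC S (√h) (Real.sqrt_nonneg _))
    refine this.trans (le_of_eq ?_)
    simp only [Pi.add_apply]
    rw [integral_add (hinner m ν' h hm inferInstance) (integrable_const _)]
    simp
  have hstep : ∀ a b h : ℝ, 0 ≤ a → 0 ≤ b → 0 ≤ h →
      ∫ y, ∏ l, f (y l) ∂(sc (a + h) ν ∗ sc b ν') ≤
      ∫ y, ∏ l, f (y l) ∂(sc a ν ∗ sc (b + h) ν') + C * √h ^ 3 := by
    intro a b h ha hb hh
    have e1 : sc (a + h) ν ∗ sc b ν' = (sc a ν ∗ sc b ν') ∗ sc h ν := by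
      rw [sc_add ν hmean a h ha hh, conv_assoc, conv_assoc, conv_comm (sc h ν)]
    have e2 : sc a ν ∗ sc (b + h) ν' = (sc a ν ∗ sc b ν') ∗ sc h ν' := by
      rw [sc_add ν' hmean' b h hb hh, conv_assoc]
    rw [e1, e2]
    exact hstep1 _ h inferInstance
  have hind : ∀ (n : ℕ) (b h : ℝ), 0 ≤ b → 0 ≤ h →
      ∫ y, ∏ l, f (y l) ∂(sc (n * h) ν ∗ sc b ν') ≤
      ∫ y, ∏ l, f (y l) ∂(sc 0 ν ∗ sc (b + n * h) ν') + n * (C * √h ^ 3) := by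
    intro n
    induction n with
    | zero => intro b h _ _; simp
    | succ n ih =>
      intro b h hb hh
      have e1 : ((n + 1 : ℕ) : ℝ) * h = n * h + h := by push_cast; ring
      have e2 : b + ((n : ℝ) * h + h) = (b + h) + n * h := by ring
      rw [e1, e2]
      have := (hstep (n * h) b h (by positivity) hb hh).trans
        (add_le_add_left (ih (b + h) h (by positivity) hh) _)
      refine this.trans (le_of_eq ?_)
      push_cast; ring
  have hz : ∀ κ : Measure (ι → ℝ), IsProbabilityMeasure κ → sc 0 κ = Measure.dirac 0 := by
    intro κ _
    simp [sc]
  have ho : ∀ κ : Measure (ι → ℝ), sc 1 κ = κ := by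
    intro κ
    simp [sc]
  have hfin : ∀ n : ℕ, ∫ y, ∏ l, f (y l) ∂ν ≤ ∫ y, ∏ l, f (y l) ∂ν' +
      C * √(1 / ((n : ℝ) + 1)) := by
    intro n
    have hn : (0 : ℝ) < (n : ℝ) + 1 := by positivity
    have := hind (n + 1) 0 (1 / ((n : ℝ) + 1)) le_rfl (by positivity)
    have e : ((n + 1 : ℕ) : ℝ) * (1 / ((n : ℝ) + 1)) = 1 := by push_cast; field_simp
    rw [zero_add, e, hz _ inferInstance, hz _ inferInstance, ho, ho, conv_dirac_zero, dirac_zero_conv] at this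
    refine this.trans (le_of_eq ?_)
    have e3 : √(1 / ((n : ℝ) + 1)) ^ 3 = (1 / ((n : ℝ) + 1)) * √(1 / ((n : ℝ) + 1)) := by
      rw [pow_succ, Real.sq_sqrt (by positivity)]
    rw [e3]
    push_cast
    field_simp
  have hlim : Filter.Tendsto (fun n : ℕ => ∫ y, ∏ l, f (y l) ∂ν' + C * √(1 / ((n : ℝ) + 1)))
      Filter.atTop (nhds (∫ y, ∏ l, f (y l) ∂ν' + C * √0)) :=
    ((tendsto_one_div_add_atTop_nhds_zero_nat (𝕜 := ℝ)).sqrt.const_mul C).const_add _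
  have := ge_of_tendsto' hlim hfin
  simpa using this

theorem bump_exists (u η : ℝ) (hη : 0 < η) : ∃ (f : ℝ → ℝ) (M : ℝ), (∀ x, 0 ≤ f x) ∧ (∀ x, f x ≤ 1) ∧
    (∀ x, iteratedDeriv 1 f x ≤ 0) ∧ (∀ n : ℕ, ContDiff ℝ n f) ∧
    (∀ n ≤ 3, ∀ x, |iteratedDeriv n f x| ≤ M) ∧ (∀ x ≤ u, f x = 1) ∧ (∀ x, u + η ≤ x → f x = 0) := by
  set f : ℝ → ℝ := fun x => Real.smoothTransition ((u + η - x) / η) with hfdef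
  have h0 : ∀ x, 0 ≤ f x := fun x => Real.smoothTransition.nonneg _
  have h1 : ∀ x, f x ≤ 1 := fun x => Real.smoothTransition.le_one _
  have hf : ∀ n : ℕ, ContDiff ℝ n f := by
    intro n
    have : ContDiff ℝ n Real.smoothTransition := Real.smoothTransition.contDiff (n := (n : ℕ∞))
    exact this.comp (by fun_prop)
  have hl : ∀ x ≤ u, f x = 1 := by
    intro x hx
    refine Real.smoothTransition.one_of_one_le ?_
    rw [le_div_iff₀ hη]; linarith
  have hr : ∀ x, u + η ≤ x → f x = 0 := by
    intro x hx
    refine Real.smoothTransition.zero_of_nonpos ?_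
    exact div_nonpos_of_nonpos_of_nonneg (by linarith) hη.le
  have hanti : Antitone f := by
    intro x y hxy
    refine Real.smoothTransition.monotone ?_
    gcongr
  have hb : ∀ n : ℕ, ∃ M, ∀ x, |iteratedDeriv n f x| ≤ M := by
    intro n
    have hc : Continuous (iteratedDeriv n f) := (hf n).continuous_iteratedDeriv n (by simp)
    obtain ⟨M, hM⟩ := (isCompact_Icc (a := u) (b := u + η)).exists_bound_of_continuousOn
      hc.continuousOn
    refine ⟨max M 1, fun x => ?_⟩
    rcases lt_or_ge x u with hx | hx
    · have : f =ᶠ[nhds x] fun _ => (1 : ℝ) := by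
        filter_upwards [Iio_mem_nhds hx] with y hy using hl y (le_of_lt hy)
      rw [this.iteratedDeriv_eq, iteratedDeriv_const]
      split_ifs <;> simp
    · rcases lt_or_ge (u + η) x with hx2 | hx2
      · have : f =ᶠ[nhds x] fun _ => (0 : ℝ) := by
          filter_upwards [Ioi_mem_nhds hx2] with y hy using hr y (le_of_lt hy)
        rw [this.iteratedDeriv_eq, iteratedDeriv_const]
        split_ifs <;> simp
      · exact (hM x ⟨hx, hx2⟩).trans (le_max_left _ _)
  choose M hM using hb
  refine ⟨f, max (max (M 0) (M 1)) (max (M 2) (M 3)), h0, h1, ?_, hf, ?_, hl, hr⟩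
  · intro x
    rw [iteratedDeriv_one]
    exact hanti.deriv_nonpos
  · intro n hn x
    refine (hM n x).trans ?_
    interval_cases n <;> simp

theorem gauss_upper (t : ℝ) (ht : 0 ≤ t) :
    (gaussianReal 0 1).real (Set.Iic (-t)) ≤ Real.exp (-(t ^ 2 / 2)) := by
  have := measure_le_le_exp_mul_mgf (μ := gaussianReal 0 1) (X := id) (t := -t) (-t) (by linarith)
    (integrable_exp_mul_gaussianReal (-t))
  rw [mgf_id_gaussianReal, ← Real.exp_add] at this
  refine this.trans (le_of_eq ?_)
  congr 1
  simp; ring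

theorem gauss_lower (v h : ℝ) (hv : 0 ≤ v) (hh : 0 ≤ h) :
    h * ((√(2 * Real.pi))⁻¹ * Real.exp (-((v + h) ^ 2 / 2))) ≤ (gaussianReal 0 1).real (Set.Ioi v) := by
  have h1 : (gaussianReal 0 1).real (Set.Ioc v (v + h)) ≤ (gaussianReal 0 1).real (Set.Ioi v) :=
    measureReal_mono Set.Ioc_subset_Ioi_self
  refine le_trans ?_ h1
  rw [Measure.real, gaussianReal_apply_eq_integral 0 one_ne_zero, ENNReal.toReal_ofReal
    (integral_nonneg fun x => gaussianPDFReal_nonneg _ _ _)]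
  have := setIntegral_mono_on (μ := volume) (s := Set.Ioc v (v + h))
    (f := fun _ => (√(2 * Real.pi))⁻¹ * Real.exp (-((v + h) ^ 2 / 2)))
    (g := gaussianPDFReal 0 1) (integrableOn_const (by simp)) (integrable_gaussianPDFReal 0 1).integrableOn
    measurableSet_Ioc (fun x hx => by
      rw [gaussianPDFReal_def]
      simp only [NNReal.coe_one, mul_one, sub_zero]
      gcongr
      have := hx.1
      have := hx.2
      have : x ^ 2 ≤ (v + h) ^ 2 := by gcongr; linarith
      linarith)
  refine le_trans (le_of_eq ?_) this
  simp [hh]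

theorem gauss_pow (v h : ℝ) (hv : 0 ≤ v) (hh : 0 ≤ h) (k : ℕ) :
    ((gaussianReal 0 1).real (Set.Iic v)) ^ k ≤
      Real.exp (-(k * (h * ((√(2 * Real.pi))⁻¹ * Real.exp (-((v + h) ^ 2 / 2)))))) := by
  have h1 : (gaussianReal 0 1).real (Set.Iic v) = 1 - (gaussianReal 0 1).real (Set.Ioi v) := by
    rw [← Set.compl_Iic, probReal_compl_eq_one_sub measurableSet_Iic]; ring
  have h2 := gauss_lower v h hv hh
  have h3 := Real.add_one_le_exp (-(h * ((√(2 * Real.pi))⁻¹ * Real.exp (-((v + h) ^ 2 / 2)))))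
  have h4 : (gaussianReal 0 1).real (Set.Iic v) ≤
    Real.exp (-(h * ((√(2 * Real.pi))⁻¹ * Real.exp (-((v + h) ^ 2 / 2))))) := by linarith
  refine (pow_le_pow_left₀ measureReal_nonneg h4 k).trans (le_of_eq ?_)
  rw [← Real.exp_nat_mul]; congr 1; ring

theorem numerics (k : ℕ) (ε δ : ℝ) (hk : 2 ≤ k) (hε : 0 < ε) (h1 : 100 * ε ≤ δ) (h2 : δ ≤ 1 / 100) :
    ∃ t v η : ℝ, 0 ≤ t ∧ 0 ≤ v ∧ 0 < η ∧
      √((2 - δ) * Real.log k) + η + √ε * t ≤ √(1 - ε) * v ∧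
      Real.exp (-(t ^ 2 / 2)) ≤ (k : ℝ) ^ (-(δ ^ 2 / (50 * ε))) ∧
      ((gaussianReal 0 1).real (Set.Iic v)) ^ k ≤
        Real.exp (-(((√(2 * Real.pi))⁻¹ * Real.exp (-3)) * (k : ℝ) ^ (δ / 20) / √(Real.log k))) := by
  have hδ : 0 < δ := by linarith
  have hk' : (2 : ℝ) ≤ k := by exact_mod_cast hk
  have hk0 : (0 : ℝ) < k := by linarith
  set L := Real.log k with hL
  have hL2 : 0.69 ≤ L := by
    have := Real.log_le_log (by norm_num) hk'
    have := Real.log_two_gt_d9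
    linarith
  have hL0 : 0 < L := by linarith
  set s := √L with hs
  have hs0 : 0 < s := Real.sqrt_pos.2 hL0
  have hss : s ^ 2 = L := Real.sq_sqrt hL0.le
  set r := √(2 - δ) with hr
  have hr0 : 0 ≤ r := Real.sqrt_nonneg _
  have hrr : r ^ 2 = 2 - δ := Real.sq_sqrt (by linarith)
  have hr1 : r ≤ 1.42 := by nlinarith
  have ha0 : 0 < √(1 - ε) := Real.sqrt_pos.2 (by linarith)
  have haa : √(1 - ε) ^ 2 = 1 - ε := Real.sq_sqrt (by linarith)
  have hb0 : 0 < √ε := Real.sqrt_pos.2 hε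
  have hbb : √ε ^ 2 = ε := Real.sq_sqrt hε.le
  refine ⟨δ * s / (5 * √ε), (r + δ / 4) * s / √(1 - ε), δ * s / 20, by positivity, by positivity,
    by positivity, ?_, ?_, ?_⟩
  · rw [Real.sqrt_mul (by linarith)]
    rw [← hr, ← hs]
    field_simp
    linarith
  · rw [Real.rpow_def_of_pos hk0, ← hL]
    gcongr
    rw [div_pow, mul_pow, mul_pow, hss, hbb]
    apply le_of_eq
    field_simp
    norm_num
  · set v := (r + δ / 4) * s / √(1 - ε) with hv
    have hv0 : 0 ≤ v := by positivity
    have hv2 : v ^ 2 ≤ 2 * L * (1 - δ / 20) := by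
      rw [hv, div_pow, mul_pow, hss, haa, div_le_iff₀ (by linarith)]
      have : (r + δ / 4) ^ 2 ≤ 2 * (1 - δ / 20) * (1 - ε) := by nlinarith
      nlinarith
    have hvs : v * s⁻¹ ≤ 2 := by
      rw [← div_eq_mul_inv, div_le_iff₀ hs0]
      refine abs_le_of_sq_le_sq' ?_ (by positivity) |>.2
      rw [mul_pow, hss]; nlinarith
    have hi : s⁻¹ ^ 2 ≤ 2 := by
      rw [inv_pow, hss]
      exact inv_le_of_inv_le₀ (by norm_num) (by linarith)
    refine (gauss_pow v s⁻¹ hv0 (by positivity) k).trans ?_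
    gcongr
    have e1 : (k : ℝ) ^ (δ / 20) = k * Real.exp (-(L * (1 - δ / 20))) := by
      rw [Real.rpow_def_of_pos hk0, ← hL]
      nth_rewrite 1 [← Real.exp_log hk0]
      rw [← hL, ← Real.exp_add]; congr 1; ring
    have e2 : Real.exp (-3) * Real.exp (-(L * (1 - δ / 20))) ≤ Real.exp (-((v + s⁻¹) ^ 2 / 2)) := by
      rw [← Real.exp_add]
      gcongr
      nlinarith
    rw [e1]
    calc _ = k * (s⁻¹ * ((√(2 * Real.pi))⁻¹ * (Real.exp (-3) * Real.exp (-(L * (1 - δ / 20)))))) := by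
          rw [div_eq_mul_inv]; ring
      _ ≤ _ := by gcongr

instance isGaussian_pi_std {ι : Type*} [Fintype ι] :
    IsGaussian (Measure.pi (fun _ : ι => gaussianReal 0 1)) := by
  rw [← isGaussian_map_equiv_iff (PiLp.continuousLinearEquiv 2 ℝ (fun _ : ι => ℝ)).symm]
  have h : (Measure.pi (fun _ : ι => gaussianReal 0 1)).map
      (PiLp.continuousLinearEquiv 2 ℝ (fun _ : ι => ℝ)).symm = stdGaussian (EuclideanSpace ℝ ι) := by
    rw [← map_pi_eq_stdGaussian]; rfl
  rw [h]
  infer_instance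

theorem pi_moments {ι : Type*} [Fintype ι] [DecidableEq ι] :
    (∀ i, ∫ z : ι → ℝ, z i ∂(Measure.pi (fun _ : ι => gaussianReal 0 1)) = 0) ∧
    (∀ i j, ∫ z : ι → ℝ, z i * z j ∂(Measure.pi (fun _ : ι => gaussianReal 0 1)) =
      if i = j then 1 else 0) := by
  have hm : ∀ i : ι, ∫ z : ι → ℝ, z i ∂(Measure.pi (fun _ : ι => gaussianReal 0 1)) = 0 := by
    intro i
    have := integral_comp_eval (μ := fun _ : ι => gaussianReal 0 1) (i := i) (f := fun x : ℝ => x)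
      (by fun_prop)
    rw [this, integral_id_gaussianReal]
  refine ⟨hm, fun i j => ?_⟩
  split_ifs with h
  · subst h
    have := integral_comp_eval (μ := fun _ : ι => gaussianReal 0 1) (i := i)
      (f := fun x : ℝ => x * x) (by fun_prop)
    rw [this]
    have hv := variance_fun_id_gaussianReal (μ := 0) (v := 1)
    rw [variance_of_integral_eq_zero (by fun_prop) integral_id_gaussianReal] at hv
    simpa [pow_two] using hv
  · have hi := (iIndepFun_pi (μ := fun _ : ι => gaussianReal 0 1) (X := fun _ x => x)
      (fun _ => by fun_prop)).indepFun h
    have := hi.integral_fun_mul_eq_mul_integral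
      (measurable_pi_apply i).aestronglyMeasurable (measurable_pi_apply j).aestronglyMeasurable
    rw [this, hm, zero_mul]

noncomputable def Lmap (ι : Type*) [Fintype ι] (ε : ℝ) : (ℝ × (ι → ℝ)) →L[ℝ] (ι → ℝ) :=
  ContinuousLinearMap.pi fun l =>
    √(1 - ε) • ((ContinuousLinearMap.proj l).comp (ContinuousLinearMap.snd ℝ ℝ (ι → ℝ)))
    + √ε • ContinuousLinearMap.fst ℝ ℝ (ι → ℝ)

theorem Lmap_apply {ι : Type*} [Fintype ι] (ε : ℝ) (p : ℝ × (ι → ℝ)) (l : ι) :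
    Lmap ι ε p l = √(1 - ε) * p.2 l + √ε * p.1 := by simp [Lmap]

noncomputable def nuX (ι : Type*) [Fintype ι] (ε : ℝ) : Measure (ι → ℝ) :=
  ((gaussianReal 0 1).prod (Measure.pi (fun _ : ι => gaussianReal 0 1))).map (Lmap ι ε)

instance {ι : Type*} [Fintype ι] (ε : ℝ) : IsGaussian (nuX ι ε) := by
  unfold nuX; infer_instance

theorem nuX_moments {ι : Type*} [Fintype ι] [DecidableEq ι] (ε : ℝ) (h0 : 0 ≤ ε) (h1 : ε ≤ 1) :
    (∀ i, ∫ z : ι → ℝ, z i ∂(nuX ι ε) = 0) ∧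
    (∀ i j, ∫ z : ι → ℝ, z i * z j ∂(nuX ι ε) = (1 - ε) * (if i = j then 1 else 0) + ε) := by
  obtain ⟨pm, pv⟩ := pi_moments (ι := ι)
  obtain ⟨j1, j2, -⟩ := gauss_moments (Measure.pi (fun _ : ι => gaussianReal 0 1))
  have w1 : Integrable (fun x : ℝ => x) (gaussianReal 0 1) :=
    memLp_one_iff_integrable.1 (memLp_id_gaussianReal 1)
  have w2 : Integrable (fun x : ℝ => x * x) (gaussianReal 0 1) :=
    (memLp_id_gaussianReal' 2 (by simp)).integrable_mul (memLp_id_gaussianReal' 2 (by simp))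
  have wv : ∫ x : ℝ, x * x ∂(gaussianReal 0 1) = 1 := by
    have hv := variance_fun_id_gaussianReal (μ := 0) (v := 1)
    rw [variance_of_integral_eq_zero (by fun_prop) integral_id_gaussianReal] at hv
    simpa [pow_two] using hv
  have wm : ∫ x : ℝ, x ∂(gaussianReal 0 1) = 0 := integral_id_gaussianReal
  constructor
  · intro i
    rw [nuX, integral_map (by fun_prop) (by exact Continuous.aestronglyMeasurable (by fun_prop))]
    simp only [Lmap_apply]
    rw [integral_add (((j1 i).comp_snd _).const_mul _) ((w1.comp_fst _).const_mul _),
      integral_const_mul, integral_const_mul, integral_fun_snd (f := fun z : ι → ℝ => z i),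
      integral_fun_fst (f := fun x : ℝ => x), pm, wm]
    simp
  · intro i j
    rw [nuX, integral_map (by fun_prop) (by exact Continuous.aestronglyMeasurable (by fun_prop))]
    simp only [Lmap_apply]
    have e : ∀ p : ℝ × (ι → ℝ), (√(1 - ε) * p.2 i + √ε * p.1) * (√(1 - ε) * p.2 j + √ε * p.1)
        = ((1 - ε) * (p.2 i * p.2 j) + ε * (p.1 * p.1)) +
          (√(1 - ε) * √ε) * (p.1 * p.2 i + p.1 * p.2 j) := by
      intro p
      have a := Real.mul_self_sqrt (show 0 ≤ 1 - ε by linarith)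
      have b := Real.mul_self_sqrt h0
      linear_combination (p.2 i * p.2 j) * a + (p.1 * p.1) * b
    simp only [e]
    have I1 := ((j2 i j).comp_snd (gaussianReal 0 1)).const_mul (1 - ε)
    have I2 := (w2.comp_fst (Measure.pi (fun _ : ι => gaussianReal 0 1))).const_mul ε
    have I3 : ∀ i, Integrable (fun p : ℝ × (ι → ℝ) => p.1 * p.2 i)
      ((gaussianReal 0 1).prod (Measure.pi (fun _ : ι => gaussianReal 0 1))) :=
      fun i => w1.mul_prod (j1 i)
    have I12 : Integrable (fun p : ℝ × (ι → ℝ) => (1 - ε) * (p.2 i * p.2 j) + ε * (p.1 * p.1))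
      ((gaussianReal 0 1).prod (Measure.pi (fun _ : ι => gaussianReal 0 1))) := I1.add I2
    have I34 : Integrable (fun p : ℝ × (ι → ℝ) => p.1 * p.2 i + p.1 * p.2 j)
      ((gaussianReal 0 1).prod (Measure.pi (fun _ : ι => gaussianReal 0 1))) := (I3 i).add (I3 j)
    rw [integral_add I12 (I34.const_mul _), integral_add I1 I2, integral_const_mul,
      integral_const_mul, integral_const_mul, integral_add (I3 i) (I3 j),
      integral_fun_snd (f := fun z : ι → ℝ => z i * z j),
      integral_fun_fst (f := fun x : ℝ => x * x),
      integral_prod_mul (fun x : ℝ => x) (fun z : ι → ℝ => z i),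
      integral_prod_mul (fun x : ℝ => x) (fun z : ι → ℝ => z j), pv, wv, wm]
    simp

theorem nuX_bound {ι : Type*} [Fintype ι] (ε : ℝ) (h1 : ε < 1) (f : ℝ → ℝ)
    (hfc : Continuous f) (h0 : ∀ x, 0 ≤ f x) (hf1 : ∀ x, f x ≤ 1) (U t v : ℝ)
    (hU : ∀ x, U ≤ x → f x = 0) (hv : U + √ε * t ≤ √(1 - ε) * v) :
    ∫ y, ∏ l, f (y l) ∂(nuX ι ε) ≤ (gaussianReal 0 1).real (Set.Iic (-t)) +
      ((gaussianReal 0 1).real (Set.Iic v)) ^ Fintype.card ι := by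
  have ha : 0 < √(1 - ε) := Real.sqrt_pos.2 (by linarith)
  rw [nuX, integral_map (by fun_prop) (by exact Continuous.aestronglyMeasurable (by fun_prop))]
  simp only [Lmap_apply]
  have hint : Integrable (fun p : ℝ × (ι → ℝ) => ∏ l, f (√(1 - ε) * p.2 l + √ε * p.1))
      ((gaussianReal 0 1).prod (Measure.pi (fun _ : ι => gaussianReal 0 1))) := by
    refine Integrable.of_bound (Continuous.aestronglyMeasurable (by fun_prop)) 1
      (Filter.Eventually.of_forall fun p => ?_)
    exact prod_bdd f h0 hf1 (fun l => √(1 - ε) * p.2 l + √ε * p.1)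
  rw [integral_prod _ hint]
  have e : ∀ w : ℝ, ∫ z : ι → ℝ, ∏ l, f (√(1 - ε) * z l + √ε * w)
      ∂(Measure.pi (fun _ : ι => gaussianReal 0 1)) =
      (∫ x, f (√(1 - ε) * x + √ε * w) ∂(gaussianReal 0 1)) ^ Fintype.card ι := fun w =>
    integral_fintype_prod_eq_pow (fun x => f (√(1 - ε) * x + √ε * w))
  have hi2 := hint.integral_prod_left
  simp only [e] at hi2 ⊢
  set q := ((gaussianReal 0 1).real (Set.Iic v)) ^ Fintype.card ι with hq
  have hq0 : 0 ≤ q := by positivity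
  have hind : Integrable ((Set.Iic (-t)).indicator (fun _ : ℝ => (1 : ℝ))) (gaussianReal 0 1) :=
    (integrable_const _).indicator measurableSet_Iic
  have key : ∀ w : ℝ, (∫ x, f (√(1 - ε) * x + √ε * w) ∂(gaussianReal 0 1)) ^ Fintype.card ι ≤
      (Set.Iic (-t)).indicator (fun _ : ℝ => (1 : ℝ)) w + q := by
    intro w
    have hfi : Integrable (fun x => f (√(1 - ε) * x + √ε * w)) (gaussianReal 0 1) := by
      refine Integrable.of_bound (Continuous.aestronglyMeasurable (by fun_prop)) 1
        (Filter.Eventually.of_forall fun x => ?_)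
      rw [Real.norm_eq_abs, abs_of_nonneg (h0 _)]; exact hf1 _
    have hn : 0 ≤ ∫ x, f (√(1 - ε) * x + √ε * w) ∂(gaussianReal 0 1) :=
      integral_nonneg fun x => h0 _
    by_cases hw : w ≤ -t
    · rw [Set.indicator_of_mem (by exact hw)]
      have : ∫ x, f (√(1 - ε) * x + √ε * w) ∂(gaussianReal 0 1) ≤ 1 := by
        have := integral_mono hfi (integrable_const (1 : ℝ)) (fun x => hf1 _)
        simpa using this
      have := pow_le_one₀ hn this (n := Fintype.card ι)
      linarith
    · rw [Set.indicator_of_notMem (by exact hw), zero_add]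
      refine pow_le_pow_left₀ hn ?_ _
      have hI : Integrable ((Set.Iic v).indicator (fun _ : ℝ => (1 : ℝ))) (gaussianReal 0 1) :=
        (integrable_const _).indicator measurableSet_Iic
      have := integral_mono hfi hI (fun x => by
        by_cases hx : x ≤ v
        · rw [Set.indicator_of_mem (by exact hx)]; exact hf1 _
        · rw [Set.indicator_of_notMem (by exact hx)]
          refine le_of_eq (hU _ ?_)
          have b0 := Real.sqrt_nonneg ε
          push Not at hx hw
          have := mul_le_mul_of_nonneg_left hx.le ha.le
          have := mul_le_mul_of_nonneg_left hw.le b0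
          linarith)
      rw [integral_indicator measurableSet_Iic] at this
      simpa using this
  have := integral_mono hi2 (hind.add (integrable_const q)) key
  refine this.trans (le_of_eq ?_)
  simp only [Pi.add_apply]
  rw [integral_add hind (integrable_const q), integral_indicator measurableSet_Iic]
  simp

theorem stmt_18 :
    ∃ ε₀ c : ℝ, 0 < ε₀ ∧ 0 < c ∧
      ∀ (Ω : Type) (_ : MeasurableSpace Ω) (μ : Measure Ω), IsProbabilityMeasure μ →
      ∀ (k : ℕ) (Y : Fin k → Ω → ℝ) (ε δ : ℝ),
      2 ≤ k → 0 ≤ ε → ε ≤ ε₀ →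
      (∀ l, Measurable (Y l)) →
      (∀ l, (∫ ω, Y l ω ∂μ) = 0) →
      (∀ l, (∫ ω, (Y l ω) ^ 2 ∂μ) = 1) →
      (∀ cv : Fin k → ℝ, ∃ (m : ℝ) (v : NNReal),
        Measure.map (fun ω => ∑ l, cv l * Y l ω) μ = gaussianReal m v) →
      (∀ l₁ l₂ : Fin k, l₁ ≠ l₂ → (∫ ω, Y l₁ ω * Y l₂ ω ∂μ) ≤ ε) →
      100 * ε ≤ δ → δ ≤ 1 / 100 →
      (μ {ω | ∀ l, Y l ω ≤ Real.sqrt ((2 - δ) * Real.log k)}).toReal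
        ≤ Real.exp (-(c * (k : ℝ) ^ (δ / 20) / Real.sqrt (Real.log k)))
          + (k : ℝ) ^ (-(δ ^ 2 / (50 * ε))) := by
  refine ⟨1, (√(2 * Real.pi))⁻¹ * Real.exp (-3), one_pos, by positivity, ?_⟩
  intro Ω _ μ hμ k Y ε δ hk hε0 _ hmeas hmean hvar hgauss hcov h100 hδ
  rcases hε0.eq_or_lt with rfl | hε
  · have h1 : μ.real {ω | ∀ l, Y l ω ≤ Real.sqrt ((2 - δ) * Real.log k)} ≤ 1 := measureReal_le_one
    have h2 : (k : ℝ) ^ (-(δ ^ 2 / (50 * (0:ℝ)))) = 1 := by simp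
    rw [h2]
    have := Real.exp_pos (-((√(2 * Real.pi))⁻¹ * Real.exp (-3) * (k : ℝ) ^ (δ / 20) / √(Real.log k)))
    have h3 : (μ {ω | ∀ l, Y l ω ≤ Real.sqrt ((2 - δ) * Real.log k)}).toReal ≤ 1 := h1
    linarith
  have hε1 : ε < 1 := by linarith
  obtain ⟨t, v, η, ht, hv, hη, hb1, hb2, hb3⟩ := numerics k ε δ hk hε h100 hδ
  set u := Real.sqrt ((2 - δ) * Real.log k) with hu
  obtain ⟨f, M, h0, h1, hd, hf, hM, hl, hr⟩ := bump_exists u η hη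
  have hfc := (hf 0).continuous
  have hYm : Measurable (fun ω => fun l => Y l ω) := measurable_pi_lambda _ hmeas
  set ν : Measure (Fin k → ℝ) := μ.map (fun ω => fun l => Y l ω) with hν
  have hG : IsGaussian ν := by
    refine isGaussian_of_map_eq_gaussianReal fun L => ?_
    obtain ⟨m, w, hmw⟩ := hgauss (fun l => L (Pi.single l 1))
    refine ⟨m, w, ?_⟩
    rw [← hmw, hν, Measure.map_map (by fun_prop) hYm]
    congr 1
    ext ω
    simp only [Function.comp]
    have : (fun l => Y l ω) = ∑ l, Y l ω • (Pi.single l (1 : ℝ) : Fin k → ℝ) := by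
      ext i
      simp [Finset.sum_apply, Pi.single_apply]
    rw [this, map_sum]
    simp [mul_comm]
  obtain ⟨xm, xv⟩ := nuX_moments (ι := Fin k) ε hε0 hε1.le
  have hprod : ∀ i j : Fin k, ∫ y, y i * y j ∂ν = ∫ ω, Y i ω * Y j ω ∂μ := by
    intro i j
    rw [hν, integral_map hYm.aemeasurable
      (by exact Continuous.aestronglyMeasurable (by fun_prop))]
  have hsl := slepian_smooth ν (nuX (Fin k) ε)
    (fun i => by
      rw [hν, integral_map hYm.aemeasurable
        (by exact Continuous.aestronglyMeasurable (by fun_prop))]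
      exact hmean i) xm
    (fun i => by
      rw [hprod, xv, if_pos rfl]
      have := hvar i
      simp only [pow_two] at this
      rw [this]; ring)
    (fun i j hij => by
      rw [hprod, xv, if_neg hij]
      simpa using hcov i j hij)
    f h0 h1 hd hf M hM
  have hX := nuX_bound (ι := Fin k) ε hε1 f hfc h0 h1 (u + η) t v hr hb1
  rw [Fintype.card_fin] at hX
  have hms : MeasurableSet {ω | ∀ l, Y l ω ≤ u} := by
    rw [Set.ofPred_forall]
    exact MeasurableSet.iInter fun l => measurableSet_le (hmeas l) measurable_const
  have hP : μ.real {ω | ∀ l, Y l ω ≤ u} ≤ ∫ y, ∏ l, f (y l) ∂ν := by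
    rw [hν, integral_map hYm.aemeasurable
      (by exact Continuous.aestronglyMeasurable (by fun_prop))]
    have hI : Integrable ({ω | ∀ l, Y l ω ≤ u}.indicator (fun _ => (1 : ℝ))) μ :=
      (integrable_const _).indicator hms
    have hF : Integrable (fun ω => ∏ l, f (Y l ω)) μ := by
      refine Integrable.of_bound ?_ 1 (Filter.Eventually.of_forall fun ω =>
        prod_bdd f h0 h1 (fun l => Y l ω))
      exact ((prod_cont (ι := Fin k) f hfc).measurable.comp hYm).aestronglyMeasurable
    have := integral_mono hI hF (fun ω => by
      by_cases hω : ω ∈ {ω | ∀ l, Y l ω ≤ u}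
      · rw [Set.indicator_of_mem hω]
        have : ∏ l, f (Y l ω) = 1 := Finset.prod_eq_one fun l _ => hl _ (hω l)
        exact this.ge
      · rw [Set.indicator_of_notMem hω]
        exact Finset.prod_nonneg fun l _ => h0 _)
    rw [integral_indicator hms] at this
    simpa using this
  have hup := gauss_upper t ht
  change μ.real {ω | ∀ l, Y l ω ≤ u} ≤ _
  linarith
end
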